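/- arXiv:2509.02162 — 5 statements merged into one kernel-verified Lean document; each statement's English description precedes it below -/
import Mathlib

section
/- Let n ≥ 2, let H = u⊥ + t₀u for a unit vector u ∈ ℝⁿ and t₀ ∈ ℝ, let 𝓔 ⊂ 𝓛ⁿ be a class of sets that contains all closed balls in ℝⁿ, and suppose ∂ : 𝓔 → 𝓛ⁿ is monotonic, respects H-cylinders, and maps balls to balls. Then there is a contraction φ_∂ : ℝ → ℝ (a 1-Lipschitz function) such that ∂B(x + tu, r) = B(x + φ_∂(t)u, r), essentially, for all x ∈ u⊥, t ∈ ℝ, and r > 0. -/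
open MeasureTheory Metric Filter Topology
open scoped RealInnerProductSpace

noncomputable section

abbrev Euc (n : ℕ) : Type := EuclideanSpace ℝ (Fin n)

/-- `A` is essentially contained in `B` (up to a set of measure zero). -/
def essSub {n : ℕ} (A B : Set (Euc n)) : Prop := volume (A \ B) = 0

/-- `A` is essentially equal to `B` (up to a set of measure zero). -/
def essEq {n : ℕ} (A B : Set (Euc n)) : Prop := volume ((A \ B) ∪ (B \ A)) = 0

/-- The infinite spherical cylinder of radius `ρ` whose axis passes through `c`
in direction `u`; for `c` in the hyperplane `H` orthogonal to `u`, this is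
`D + span{u}` for the closed ball `D` in `H` with centre `c` and radius `ρ`. -/
def cyl {n : ℕ} (u c : Euc n) (ρ : ℝ) : Set (Euc n) :=
  {y | ‖(y - c) - ⟪y - c, u⟫ • u‖ ≤ ρ}

/-!
Let `K = span {u}` and let `π` be the orthogonal projection onto `Kᗮ`. Monotonicity says that
`B(x, r) ⊆ B(y, s)` forces the same inclusion between the image balls `B(c x r, ρ x r)` and
`B(c y s, ρ y s)`, and the cylinder condition says `ρ x r + ‖π (c x r) - π x‖ ≤ r`. The ball
`B(x, r)` contains small balls around each of its interior points, and by the cylinder condition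
`π` hardly moves the centres of these small balls, so `ρ x r` is at least `r`. Hence `ρ x r = r`
and `c x r - x ∈ K`.

If `x - y ∈ Kᗮ` and `B(x, r)` is internally tangent to `B(y, s)`, then by Pythagoras the images can
only be nested when `c x r - x = c y s - y`. Moving out and back along `Kᗮ` shows that the
displacement `c x r - x` depends neither on `r` nor on the `Kᗮ`-component of `x`. So `x ↦ c x r`
induces a map of `K`, and nesting of balls makes it a contraction.
-/

section Balls

variable {E : Type*} [NormedAddCommGroup E] [NormedSpace ℝ E]

theorem closedBall_subset_closedBall_iff [Nontrivial E] {a b : E} {r s : ℝ} (hr : 0 ≤ r) :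
    closedBall a r ⊆ closedBall b s ↔ r + dist a b ≤ s := by
  refine ⟨fun h => ?_, closedBall_subset_closedBall'⟩
  obtain ⟨w, hw, hray⟩ : ∃ w : E, ‖w‖ = r ∧ SameRay ℝ (a - b) w := by
    rcases eq_or_ne (a - b) 0 with hab | hab
    · obtain ⟨w, hw⟩ := exists_norm_eq E hr
      exact ⟨w, hw, hab ▸ SameRay.zero_left w⟩
    · refine ⟨(r / ‖a - b‖) • (a - b), ?_, SameRay.sameRay_nonneg_smul_right _ (by positivity)⟩
      rw [norm_smul, Real.norm_of_nonneg (by positivity),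
        div_mul_cancel₀ _ (norm_ne_zero_iff.2 hab)]
  have hmem : a + w ∈ closedBall b s := h (by simp [hw])
  rwa [mem_closedBall, dist_eq_norm, add_sub_right_comm, hray.norm_add, hw, add_comm,
    ← dist_eq_norm] at hmem

theorem closedBall_subset_of_ae_le [MeasurableSpace E] {μ : Measure E} [μ.IsOpenPosMeasure]
    {a : E} {r : ℝ} {C : Set E} (hr : r ≠ 0) (hC : IsClosed C) (h : closedBall a r ≤ᵐ[μ] C) :
    closedBall a r ⊆ C := by
  have hnull : μ (ball a r \ C) = 0 :=
    measure_mono_null (Set.sdiff_subset_sdiff_left ball_subset_closedBall) (ae_le_set.1 h)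
  rw [← closure_ball a hr]
  exact closure_minimal
    (Set.sdiff_eq_empty.1 (((isOpen_ball.sdiff hC).measure_eq_zero_iff μ).1 hnull)) hC

end Balls

section Cylinders

variable {E : Type*} [NormedAddCommGroup E] [InnerProductSpace ℝ E]
  (K : Submodule ℝ E) [K.HasOrthogonalProjection]

theorem orthogonalProjectionOnto_image_closedBall (a : E) (r : ℝ) :
    K.orthogonalProjectionOnto '' closedBall a r =
      closedBall (K.orthogonalProjectionOnto a) r := by
  refine Set.Subset.antisymm (Set.image_subset_iff.2 fun x hx => ?_) fun y hy => ?_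
  · exact (K.lipschitzWith_orthogonalProjectionOnto.dist_le_mul x a).trans (by simpa using hx)
  · refine ⟨a + (y - K.orthogonalProjectionOnto a : K), ?_, ?_⟩
    · rwa [mem_closedBall, dist_self_add_left, Submodule.norm_coe, ← dist_eq_norm]
    · rw [map_add, Submodule.orthogonalProjectionOnto_mem_subspace_eq_self, add_sub_cancel]

/-- The closed cylinder `B + K`, where `B` is the ball of radius `ρ` around (the projection of) `c`
in `Kᗮ`, encoded as the preimage of `B` under the orthogonal projection onto `Kᗮ`. -/
def closedCylinder (c : E) (ρ : ℝ) : Set E :=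
  Kᗮ.orthogonalProjectionOnto ⁻¹' closedBall (Kᗮ.orthogonalProjectionOnto c) ρ

theorem isClosed_closedCylinder (c : E) (ρ : ℝ) : IsClosed (closedCylinder K c ρ) :=
  isClosed_closedBall.preimage Kᗮ.orthogonalProjectionOnto.continuous

variable {K}

theorem closedBall_subset_closedCylinder_iff [Nontrivial Kᗮ] {a c : E} {r s : ℝ} (hr : 0 ≤ r) :
    closedBall a r ⊆ closedCylinder K c s ↔
      r + dist (Kᗮ.orthogonalProjectionOnto a) (Kᗮ.orthogonalProjectionOnto c) ≤ s := by
  rw [closedCylinder, ← Set.image_subset_iff, orthogonalProjectionOnto_image_closedBall,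
    closedBall_subset_closedBall_iff hr]

end Cylinders

/-- The map on balls `B(x, r) ↦ B(c x r, ρ x r)`, `r > 0`, is monotone for inclusion and keeps the
image of `B(x, r)` in the cylinder around `B(x, r)` with axis direction `K`. -/
structure IsCylindricalBallMap {E : Type*} [NormedAddCommGroup E] [InnerProductSpace ℝ E]
    (K : Submodule ℝ E) [K.HasOrthogonalProjection] (c : E → ℝ → E) (ρ : E → ℝ → ℝ) : Prop where
  radius_pos : ∀ x r, 0 < r → 0 < ρ x r
  monotone : ∀ x r y s, 0 < r → 0 < s → closedBall x r ⊆ closedBall y s →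
    closedBall (c x r) (ρ x r) ⊆ closedBall (c y s) (ρ y s)
  subset_closedCylinder : ∀ x r, 0 < r → closedBall (c x r) (ρ x r) ⊆ closedCylinder K x r

namespace IsCylindricalBallMap

variable {E : Type*} [NormedAddCommGroup E] [InnerProductSpace ℝ E]
  {K : Submodule ℝ E} [K.HasOrthogonalProjection] [Nontrivial Kᗮ]
  {c : E → ℝ → E} {ρ : E → ℝ → ℝ} {x y : E} {r s : ℝ}

theorem radius_add_dist_center_le (h : IsCylindricalBallMap K c ρ) (hr : 0 < r)
    (hxy : r + dist x y ≤ s) : ρ x r + dist (c x r) (c y s) ≤ ρ y s := by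
  have : Nontrivial E := Kᗮ.subtype_injective.nontrivial
  have hs : 0 < s := by linarith [dist_nonneg (x := x) (y := y)]
  exact (closedBall_subset_closedBall_iff (h.radius_pos x r hr).le).1
    (h.monotone x r y s hr hs (closedBall_subset_closedBall' hxy))

theorem radius_add_dist_orthogonalProjectionOnto_le (h : IsCylindricalBallMap K c ρ) (hr : 0 < r) :
    ρ x r + dist (Kᗮ.orthogonalProjectionOnto (c x r)) (Kᗮ.orthogonalProjectionOnto x) ≤ r :=
  (closedBall_subset_closedCylinder_iff (h.radius_pos x r hr).le).1 (h.subset_closedCylinder x r hr)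

theorem closedBall_sub_subset_closedCylinder (h : IsCylindricalBallMap K c ρ) {ε : ℝ}
    (hε : 0 < ε) : closedBall x (r - ε) ⊆ closedCylinder K (c x r) (ρ x r + ε) := by
  intro y hy
  rw [mem_closedBall] at hy
  have hρ := h.radius_pos y ε hε
  have hproj := h.radius_add_dist_orthogonalProjectionOnto_le (x := y) hε
  have hcenter := h.radius_add_dist_center_le (y := x) (s := r) hε (by linarith)
  have hcontract := Kᗮ.lipschitzWith_orthogonalProjectionOnto.dist_le_mul (c y ε) (c x r)
  rw [NNReal.coe_one, one_mul] at hcontract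
  rw [closedCylinder, Set.mem_preimage, mem_closedBall]
  have htriangle := dist_triangle_left (Kᗮ.orthogonalProjectionOnto y)
    (Kᗮ.orthogonalProjectionOnto (c x r)) (Kᗮ.orthogonalProjectionOnto (c y ε))
  linarith

theorem le_radius (h : IsCylindricalBallMap K c ρ) (hr : 0 < r) : r ≤ ρ x r := by
  have hle : ∀ ε, 0 < ε → ε ≤ r → r ≤ ρ x r + 2 * ε := by
    intro ε hε hεr
    have := (closedBall_subset_closedCylinder_iff (sub_nonneg.2 hεr)).1
      (h.closedBall_sub_subset_closedCylinder (x := x) hε)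
    linarith [dist_nonneg (x := Kᗮ.orthogonalProjectionOnto x)
      (y := Kᗮ.orthogonalProjectionOnto (c x r))]
  by_contra! hlt
  have hρ := h.radius_pos x r hr
  linarith [hle ((r - ρ x r) / 3) (by linarith) (by linarith)]

theorem radius_eq (h : IsCylindricalBallMap K c ρ) (hr : 0 < r) : ρ x r = r :=
  le_antisymm
    ((le_add_of_nonneg_right dist_nonneg).trans (h.radius_add_dist_orthogonalProjectionOnto_le hr))
    (h.le_radius hr)

theorem center_sub_mem (h : IsCylindricalBallMap K c ρ) (hr : 0 < r) : c x r - x ∈ K := by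
  have hdist := h.radius_add_dist_orthogonalProjectionOnto_le (x := x) hr
  rw [h.radius_eq hr, add_le_iff_nonpos_right, dist_le_zero, ← sub_eq_zero, ← map_sub,
    Submodule.orthogonalProjectionOnto_eq_zero_iff, K.orthogonal_orthogonal] at hdist
  exact hdist

theorem dist_center_le (h : IsCylindricalBallMap K c ρ) (hr : 0 < r) (hxy : r + dist x y ≤ s) :
    dist (c x r) (c y s) ≤ s - r := by
  have hs : 0 < s := by linarith [dist_nonneg (x := x) (y := y)]
  have hle := h.radius_add_dist_center_le hr hxy
  rw [h.radius_eq hr, h.radius_eq hs] at hle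
  linarith

theorem center_sub_eq_of_add_dist_eq (h : IsCylindricalBallMap K c ρ) (hr : 0 < r)
    (hxy : x - y ∈ Kᗮ) (hs : r + dist x y = s) : c x r - x = c y s - y := by
  have hs_pos : 0 < s := by linarith [dist_nonneg (x := x) (y := y)]
  set δ := (c x r - x) - (c y s - y) with hδ
  have hδK : δ ∈ K := K.sub_mem (h.center_sub_mem hr) (h.center_sub_mem hs_pos)
  have hle : ‖(x - y) + δ‖ ≤ ‖x - y‖ := by
    calc ‖(x - y) + δ‖ = dist (c x r) (c y s) := by rw [dist_eq_norm, hδ]; congr 1; abel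
      _ ≤ s - r := h.dist_center_le hr hs.le
      _ = ‖x - y‖ := by rw [← hs, add_sub_cancel_left, dist_eq_norm]
  have hpythagoras := norm_add_sq_eq_norm_sq_add_norm_sq_real
    (Submodule.inner_left_of_mem_orthogonal hδK hxy)
  have hδ_zero : ‖δ‖ = 0 := by
    nlinarith [norm_nonneg ((x - y) + δ), norm_nonneg (x - y), norm_nonneg δ]
  exact sub_eq_zero.1 (norm_eq_zero.1 hδ_zero)

theorem center_eq_of_lt (h : IsCylindricalBallMap K c ρ) (hr : 0 < r) (hrs : r < s) :
    c x r = c x s := by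
  obtain ⟨w, hw⟩ := exists_norm_eq Kᗮ (c := (s - r) / 2) (by linarith)
  have hw' : ‖(w : E)‖ = (s - r) / 2 := hw
  have hout : c x r - x = c (x + w) (r + (s - r) / 2) - (x + w) :=
    h.center_sub_eq_of_add_dist_eq hr (by simp) (by simp [hw'])
  have hback : c (x + w) (r + (s - r) / 2) - (x + w) = c x s - x :=
    h.center_sub_eq_of_add_dist_eq (by linarith) (by simp) (by rw [dist_self_add_left, hw']; ring)
  exact sub_left_injective (hout.trans hback)

theorem center_eq (h : IsCylindricalBallMap K c ρ) (hr : 0 < r) (hs : 0 < s) :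
    c x r = c x s := by
  rcases lt_trichotomy r s with hrs | rfl | hsr
  · exact h.center_eq_of_lt hr hrs
  · rfl
  · exact (h.center_eq_of_lt hs hsr).symm

theorem center_add_of_mem_orthogonal (h : IsCylindricalBallMap K c ρ) (hr : 0 < r) (hs : 0 < s)
    (hx : x ∈ Kᗮ) : c (x + y) r = x + c y s := by
  have hshift : c (x + y) r - (x + y) = c y (r + dist (x + y) y) - y :=
    h.center_sub_eq_of_add_dist_eq hr (by simpa using hx) rfl
  rw [h.center_eq (x := y) (by positivity) hs] at hshift
  rw [eq_add_of_sub_eq hshift]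
  abel

theorem exists_lipschitzWith_center (h : IsCylindricalBallMap K c ρ) :
    ∃ φ : K → K, LipschitzWith 1 φ ∧
      ∀ x ∈ Kᗮ, ∀ (t : K) (r : ℝ), 0 < r → c (x + t) r = x + φ t := by
  have hmem (t : K) : c t 1 ∈ K := by
    simpa using K.add_mem (h.center_sub_mem (x := (t : E)) one_pos) t.2
  refine ⟨fun t => ⟨c t 1, hmem t⟩, LipschitzWith.mk_one fun t t' => ?_,
    fun x hx t r hr => h.center_add_of_mem_orthogonal hr one_pos hx⟩
  calc dist (c t 1) (c t' 1) = dist (c t 1) (c t' (1 + dist t t')) := by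
        rw [h.center_eq (x := (t' : E)) one_pos (by positivity : 0 < 1 + dist t t')]
    _ ≤ 1 + dist t t' - 1 := h.dist_center_le one_pos le_rfl
    _ = dist t t' := add_sub_cancel_left 1 _

end IsCylindricalBallMap

theorem stmt0_general {E : Type*} [NormedAddCommGroup E] [InnerProductSpace ℝ E]
    [MeasurableSpace E] (μ : Measure E) [μ.IsOpenPosMeasure]
    (K : Submodule ℝ E) [K.HasOrthogonalProjection] [Nontrivial Kᗮ] (D : Set E → Set E)
    (hmono : ∀ x r y s, 0 < r → 0 < s → closedBall x r ⊆ closedBall y s →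
      D (closedBall x r) ≤ᵐ[μ] D (closedBall y s))
    (hcyl : ∀ x r, 0 < r → D (closedBall x r) ≤ᵐ[μ] closedCylinder K x r)
    (hballs : ∀ x r, 0 < r → ∃ x' r', 0 < r' ∧ D (closedBall x r) =ᵐ[μ] closedBall x' r') :
    ∃ φ : K → K, LipschitzWith 1 φ ∧ ∀ x ∈ Kᗮ, ∀ (t : K) (r : ℝ), 0 < r →
      D (closedBall (x + t) r) =ᵐ[μ] closedBall (x + φ t) r := by
  choose! c ρ hρ hcρ using hballs
  have h : IsCylindricalBallMap K c ρ :=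
    { radius_pos := hρ
      monotone := fun x r y s hr hs hxy =>
        closedBall_subset_of_ae_le (hρ x r hr).ne' isClosed_closedBall
          ((hcρ x r hr).symm.le.trans ((hmono x r y s hr hs hxy).trans (hcρ y s hs).le))
      subset_closedCylinder := fun x r hr =>
        closedBall_subset_of_ae_le (hρ x r hr).ne' (isClosed_closedCylinder K x r)
          ((hcρ x r hr).symm.le.trans (hcyl x r hr)) }
  obtain ⟨φ, hφ, hcφ⟩ := h.exists_lipschitzWith_center
  refine ⟨φ, hφ, fun x hx t r hr => ?_⟩
  simpa only [hcφ x hx t r hr, h.radius_eq hr] using hcρ (x + t) r hr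

section Line

variable {E : Type*} [NormedAddCommGroup E]

theorem exists_lipschitzWith_smul_eq [NormedSpace ℝ E] {u : E} (hu : ‖u‖ = 1) {C : NNReal}
    {φ : (ℝ ∙ u) → (ℝ ∙ u)} (hφ : LipschitzWith C φ) :
    ∃ ψ : ℝ → ℝ, LipschitzWith C ψ ∧
      ∀ t : ℝ, (φ ⟨t • u, Submodule.mem_span_singleton.2 ⟨t, rfl⟩⟩ : E) = ψ t • u := by
  let e := LinearIsometryEquiv.toSpanUnitSingleton (𝕜 := ℝ) u hu
  refine ⟨e.symm ∘ φ ∘ e, by simpa using e.symm.lipschitz.comp (hφ.comp e.lipschitz), fun t => ?_⟩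
  exact congrArg Subtype.val (e.apply_symm_apply (φ (e t))).symm

theorem nontrivial_orthogonal_span_singleton [InnerProductSpace ℝ E]
    (hE : 1 < Module.finrank ℝ E) (u : E) : Nontrivial (ℝ ∙ u)ᗮ := by
  rw [Submodule.nontrivial_iff_ne_bot, Ne, Submodule.orthogonal_eq_bot_iff]
  intro htop
  have hle : Module.finrank ℝ (ℝ ∙ u) ≤ 1 := by
    simpa using finrank_span_le_card (R := ℝ) ({u} : Set E)
  rw [htop, finrank_top] at hle
  exact hle.not_gt hE

end Line

theorem essSub_iff_ae_le {n : ℕ} {A B : Set (Euc n)} : essSub A B ↔ A ≤ᵐ[volume] B :=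
  ae_le_set.symm

theorem essEq_iff_ae_eq {n : ℕ} {A B : Set (Euc n)} : essEq A B ↔ A =ᵐ[volume] B :=
  measure_symmDiff_eq_zero_iff

theorem cyl_eq_closedCylinder {n : ℕ} {u : Euc n} (hu : ‖u‖ = 1) (c : Euc n) (ρ : ℝ) :
    cyl u c ρ = closedCylinder (ℝ ∙ u) c ρ := by
  ext y
  rw [closedCylinder, Set.mem_preimage, mem_closedBall, dist_eq_norm, ← map_sub,
    Submodule.coe_norm, ← Submodule.starProjection_apply, Submodule.starProjection_orthogonal_val,
    Submodule.starProjection_unit_singleton ℝ hu, real_inner_comm]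
  rfl

/-- Lemma 4.1: existence of the associated contraction `φ_∂` for a monotonic map
that respects `H`-cylinders and maps balls to balls, where `H = u⊥ + t₀u`. -/
theorem stmt0 {n : ℕ} (hn : 2 ≤ n) (u : Euc n) (hu : ‖u‖ = 1) (t₀ : ℝ)
    (𝓔 : Set (Set (Euc n)))
    (h𝓔meas : ∀ A ∈ 𝓔, MeasurableSet A ∧ volume A ≠ ⊤)
    (h𝓔balls : ∀ (x : Euc n) (r : ℝ), 0 < r → closedBall x r ∈ 𝓔)
    (D : Set (Euc n) → Set (Euc n))
    (hDmeas : ∀ A ∈ 𝓔, MeasurableSet (D A) ∧ volume (D A) ≠ ⊤)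
    (hmono : ∀ A ∈ 𝓔, ∀ B ∈ 𝓔, essSub A B → essSub (D A) (D B))
    (hcyl : ∀ A ∈ 𝓔, ∀ (c : Euc n) (ρ : ℝ), 0 < ρ →
        essSub A (cyl u c ρ) → essSub (D A) (cyl u c ρ))
    (hballs : ∀ A ∈ 𝓔, (∃ (x : Euc n) (r : ℝ), 0 < r ∧ essEq A (closedBall x r)) →
        ∃ (x' : Euc n) (r' : ℝ), 0 < r' ∧ essEq (D A) (closedBall x' r')) :
    ∃ φ : ℝ → ℝ, LipschitzWith 1 φ ∧
      ∀ x : Euc n, ⟪x, u⟫ = 0 → ∀ t r : ℝ, 0 < r →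
        essEq (D (closedBall (x + t • u) r)) (closedBall (x + φ t • u) r) := by
  simp only [essSub_iff_ae_le, essEq_iff_ae_eq, cyl_eq_closedCylinder hu] at hmono hcyl hballs ⊢
  have := nontrivial_orthogonal_span_singleton (by rwa [finrank_euclideanSpace_fin]) u
  obtain ⟨φ, hφ, hDφ⟩ := stmt0_general volume (ℝ ∙ u) D
    (fun x r y s hr hs hxy => hmono _ (h𝓔balls x r hr) _ (h𝓔balls y s hs) hxy.eventuallyLE)
    (fun x r hr => hcyl _ (h𝓔balls x r hr) x r hr
      ((closedBall_subset_closedCylinder_iff hr.le).2 (by simp)).eventuallyLE)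
    (fun x r hr => hballs _ (h𝓔balls x r hr) ⟨x, r, hr, .rfl⟩)
  obtain ⟨ψ, hψ, hφψ⟩ := exists_lipschitzWith_smul_eq hu hφ
  refine ⟨ψ, hψ, fun x hx t r hr => ?_⟩
  simpa only [hφψ] using hDφ x (Submodule.mem_orthogonal_singleton_iff_inner_left.2 hx)
    ⟨t • u, Submodule.mem_span_singleton.2 ⟨t, rfl⟩⟩ r hr
end
end

section
/- Let n ≥ 2, let 𝓔 ⊂ 𝓛ⁿ contain all convex bodies (𝒦ⁿₙ ⊂ 𝓔), let ∂ : 𝓔 → 𝓛ⁿ be monotonic, measure preserving, and map balls to balls, and let ψ_{∂,r} : ℝⁿ → ℝⁿ (r > 0) be the associated contractions with ∂B(x,r) = B(ψ_{∂,r}(x), r) essentially. Let H = u⊥ + t₀u (u a unit vector, t₀ ∈ ℝ) be a hyperplane. If there is an r₀ > 0 such that the restriction of ψ_{∂,r₀} to H is the identity on H, then the restriction of ∂ to 𝒦ⁿₙ respects H-cylinders, and consequently ψ_{∂,r} is independent of r > 0. -/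
open MeasureTheory Metric Filter Topology
open scoped RealInnerProductSpace

noncomputable section

/-- A convex body: a compact convex set with nonempty interior. -/
def isConvexBody {n : ℕ} (A : Set (Euc n)) : Prop :=
  IsCompact A ∧ Convex ℝ A ∧ (interior A).Nonempty

/-! Monotonicity says that `dist x y ≤ s - r` implies `dist (ψ r x) (ψ s y) ≤ s - r`. If `ψ r₀`
fixes a line pointwise, comparing a ball of radius `r` about a point `x` of the line with the two
balls of radius `r₀` whose centers lie on the line at distance `|r - r₀|` from `x` forces
`ψ r x = x`. Hence each contraction `ψ r` fixes the line pointwise and so displaces every point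
orthogonally to it. For `w` parallel to the line with `‖w‖ = |s - r|`, the points `ψ r x` and
`ψ s (x + w)` are at most `‖w‖` apart, so by Pythagoras their displacements from `x` and `x + w`
agree; the same holds for `ψ s x` and `ψ s (x + w)`, and therefore `ψ r x = ψ s x`.

A cylinder over a ball in `H` is an intersection of half-spaces with normals parallel to `H`. As far
as a bounded set is concerned, such a half-space can be replaced by a large ball centered on `H`,
which the map on sets essentially keeps in place. -/

section Ae

variable {X : Type*} [TopologicalSpace X] [MeasurableSpace X] {μ : Measure X}

theorem subset_of_ae_le_of_isOpen_of_isClosed [μ.IsOpenPosMeasure] {U F : Set X} (hU : IsOpen U)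
    (hF : IsClosed F) (h : U ≤ᵐ[μ] F) : U ⊆ F :=
  Set.sdiff_eq_empty.mp ((hU.sdiff hF).eq_empty_of_measure_zero (ae_le_set.mp h))

theorem ae_le_of_forall_notMem_exists_isClosed [SecondCountableTopology X] {S C : Set X}
    (h : ∀ y ∉ C, ∃ F : Set X, IsClosed F ∧ y ∉ F ∧ S ≤ᵐ[μ] F) : S ≤ᵐ[μ] C := by
  refine ae_le_set.mpr (measure_null_of_locally_null _ fun y hy ↦ ?_)
  obtain ⟨F, hF, hyF, hSF⟩ := h y hy.2
  refine ⟨(S \ C) ∩ Fᶜ, inter_mem_nhdsWithin _ (hF.isOpen_compl.mem_nhds hyF), ?_⟩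
  exact measure_mono_null (t := S \ F) (fun z hz ↦ ⟨hz.1.1, hz.2⟩) (ae_le_set.mp hSF)

end Ae

section NormedSpace

variable {E : Type*} [NormedAddCommGroup E] [NormedSpace ℝ E]

theorem exists_norm_eq_one_and_norm_smul_eq [Nontrivial E] (x : E) :
    ∃ e : E, ‖e‖ = 1 ∧ ‖x‖ • e = x := by
  rcases eq_or_ne x 0 with rfl | hx
  · obtain ⟨e, he⟩ := exists_norm_eq E zero_le_one
    exact ⟨e, he, by rw [norm_zero, zero_smul]⟩
  · exact ⟨‖x‖⁻¹ • x, norm_smul_inv_norm (𝕜 := ℝ) hx, smul_inv_smul₀ (norm_ne_zero_iff.mpr hx) x⟩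

theorem exists_norm_smul_eq_abs {v : E} (hv : v ≠ 0) (t : ℝ) : ∃ k : ℝ, ‖k • v‖ = |t| :=
  ⟨t / ‖v‖, by
    rw [norm_smul, norm_div, norm_norm, div_mul_cancel₀ _ (norm_ne_zero_iff.mpr hv),
      Real.norm_eq_abs]⟩

theorem dist_le_sub_of_closedBall_subset_closedBall [Nontrivial E] {a b : E} {r s : ℝ}
    (hr : 0 ≤ r) (h : closedBall a r ⊆ closedBall b s) : dist a b ≤ s - r := by
  obtain ⟨e, he, hab⟩ := exists_norm_eq_one_and_norm_smul_eq (a - b)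
  have hmem : a + r • e ∈ closedBall a r := by
    rw [mem_closedBall, dist_self_add_left, norm_smul, he, mul_one, Real.norm_of_nonneg hr]
  have hdist : dist (a + r • e) b = dist a b + r := by
    rw [dist_eq_norm, add_sub_right_comm, ← hab, ← add_smul, norm_smul, he, mul_one,
      Real.norm_of_nonneg (by positivity), dist_eq_norm]
  linarith [hdist ▸ mem_closedBall.mp (h hmem)]

theorem dist_le_sub_of_closedBall_ae_le_closedBall [Nontrivial E] [MeasurableSpace E]
    {μ : Measure E} [μ.IsOpenPosMeasure] {a b : E} {r s : ℝ} (hr : 0 < r)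
    (h : closedBall a r ≤ᵐ[μ] closedBall b s) : dist a b ≤ s - r := by
  have hball : ball a r ⊆ closedBall b s :=
    subset_of_ae_le_of_isOpen_of_isClosed isOpen_ball isClosed_closedBall
      (ball_subset_closedBall.eventuallyLE.trans h)
  refine dist_le_sub_of_closedBall_subset_closedBall hr.le ?_
  rw [← closure_ball a hr.ne']
  exact closure_minimal hball isClosed_closedBall

end NormedSpace

section InnerProductSpace

variable {E : Type*} [NormedAddCommGroup E] [InnerProductSpace ℝ E]

theorem eq_zero_of_norm_sub_le_of_norm_add_le {p w : E} (hsub : ‖p - w‖ ≤ ‖w‖)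
    (hadd : ‖p + w‖ ≤ ‖w‖) : p = 0 := by
  have hpar := parallelogram_law_with_norm ℝ p w
  have hp : ‖p‖ * ‖p‖ ≤ 0 := by
    nlinarith [mul_self_le_mul_self (norm_nonneg _) hsub, mul_self_le_mul_self (norm_nonneg _) hadd]
  exact norm_eq_zero.mp (mul_self_eq_zero.mp (hp.antisymm (mul_self_nonneg _)))

theorem eq_zero_of_inner_eq_zero_of_norm_sub_le {p w : E} (hpw : ⟪p, w⟫ = 0)
    (h : ‖p - w‖ ≤ ‖w‖) : p = 0 := by
  refine eq_zero_of_norm_sub_le_of_norm_add_le h ?_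
  rwa [← norm_sub_eq_norm_add (inner_eq_zero_symm.mp hpw)]

theorem inner_sub_eq_zero_of_lipschitzWith_of_fixes_line {f : E → E} (hf : LipschitzWith 1 f)
    {z v : E} (hfix : ∀ t : ℝ, f (z + t • v) = z + t • v) (x : E) : ⟪f x - x, v⟫ = 0 := by
  have hbound (t : ℝ) : ‖f x - z‖ ^ 2 - ‖x - z‖ ^ 2 ≤ t * (2 * ⟪f x - x, v⟫) := by
    have hdist : ‖f x - z - t • v‖ ≤ ‖x - z - t • v‖ := by
      simpa only [hfix, dist_eq_norm, NNReal.coe_one, one_mul, sub_sub]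
        using hf.dist_le_mul x (z + t • v)
    have hsq := pow_le_pow_left₀ (norm_nonneg _) hdist 2
    have hinner : ⟪f x - x, v⟫ = ⟪f x - z, v⟫ - ⟪x - z, v⟫ := by
      rw [← inner_sub_left, sub_sub_sub_cancel_right]
    rw [norm_sub_sq_real (f x - z), norm_sub_sq_real (x - z), real_inner_smul_right,
      real_inner_smul_right] at hsq
    rw [hinner]
    linarith
  by_contra hne
  have hcontra := hbound ((‖f x - z‖ ^ 2 - ‖x - z‖ ^ 2 - 1) / (2 * ⟪f x - x, v⟫))
  rw [div_mul_cancel₀ _ (mul_ne_zero two_ne_zero hne)] at hcontra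
  linarith

theorem sub_eq_sub_of_inner_eq_zero_of_norm_sub_le {x w a b : E} (ha : ⟪a - x, w⟫ = 0)
    (hb : ⟪b - (x + w), w⟫ = 0) (hab : ‖a - b‖ ≤ ‖w‖) : a - x = b - (x + w) := by
  refine sub_eq_zero.mp (eq_zero_of_inner_eq_zero_of_norm_sub_le (w := w) ?_ ?_)
  · rw [inner_sub_left, ha, hb, sub_zero]
  · rwa [show a - x - (b - (x + w)) - w = a - b by abel]

theorem eventually_subset_closedBall_sub_smul {A : Set E} (hA : Bornology.IsBounded A) {z v : E}
    (hv : ‖v‖ = 1) {α β : ℝ} (hAα : ∀ a ∈ A, ⟪a - z, v⟫ ≤ α) (hαβ : α < β) :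
    ∀ᶠ k : ℝ in atTop, A ⊆ closedBall (z - k • v) (k + β) := by
  obtain ⟨M, hM⟩ := hA.subset_closedBall z
  filter_upwards [eventually_ge_atTop 0, eventually_ge_atTop (-β),
    eventually_ge_atTop ((M ^ 2 - β ^ 2) / (2 * (β - α)))] with k hk hkβ hkM a ha
  rw [div_le_iff₀ (by linarith)] at hkM
  have haM : ‖a - z‖ ^ 2 ≤ M ^ 2 :=
    pow_le_pow_left₀ (norm_nonneg _) (mem_closedBall_iff_norm.mp (hM ha)) 2
  rw [mem_closedBall_iff_norm, ← sub_add]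
  refine le_of_sq_le_sq ?_ (by linarith)
  calc ‖a - z + k • v‖ ^ 2
      = ‖a - z‖ ^ 2 + 2 * (k * ⟪a - z, v⟫) + k ^ 2 := by
        rw [norm_add_sq_real, real_inner_smul_right, norm_smul, hv, mul_one, Real.norm_eq_abs,
          sq_abs]
    _ ≤ M ^ 2 + 2 * (k * α) + k ^ 2 := by gcongr; exact hAα a ha
    _ ≤ (k + β) ^ 2 := by linarith

theorem notMem_closedBall_sub_smul {y z v : E} (hv : ‖v‖ = 1) {β : ℝ} (hy : β < ⟪y - z, v⟫)
    (k : ℝ) : y ∉ closedBall (z - k • v) (k + β) := by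
  rw [mem_closedBall_iff_norm, not_le, ← sub_add]
  calc k + β < k + ⟪y - z, v⟫ := by gcongr
    _ = ⟪y - z + k • v, v⟫ := by
      rw [inner_add_left, real_inner_smul_left, real_inner_self_eq_norm_sq, hv]
      ring
    _ ≤ ‖y - z + k • v‖ := by simpa only [hv, mul_one] using real_inner_le_norm (y - z + k • v) v

theorem orthogonal_span_singleton_ne_bot (hE : 1 < Module.rank ℝ E) (u : E) : (ℝ ∙ u)ᗮ ≠ ⊥ := by
  intro hbot
  rw [Submodule.orthogonal_eq_bot_iff, Submodule.span_singleton_eq_top_iff] at hbot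
  exact hE.not_ge (rank_le_one_iff.mpr ⟨u, hbot⟩)

theorem inner_smul_add_left_of_mem_orthogonal {u v : E} (hu : ‖u‖ = 1) (hv : v ∈ (ℝ ∙ u)ᗮ) (t : ℝ) :
    ⟪t • u + v, u⟫ = t := by
  rw [inner_add_left, real_inner_smul_left, real_inner_self_eq_norm_sq, hu,
    Submodule.mem_orthogonal_singleton_iff_inner_left.mp hv]
  ring

end InnerProductSpace

section BallMonotone

/-- The map `B(x, r) ↦ B(ψ r x, r)` on balls of positive radius preserves inclusion, the inclusion
`B(x, r) ⊆ B(y, s)` being encoded as `dist x y ≤ s - r`. -/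
def BallMonotone {X : Type*} [PseudoMetricSpace X] (ψ : ℝ → X → X) : Prop :=
  ∀ ⦃x y : X⦄ ⦃r s : ℝ⦄, 0 < r → 0 < s → dist x y ≤ s - r → dist (ψ r x) (ψ s y) ≤ s - r

namespace BallMonotone

theorem of_ae_mono {E : Type*} [NormedAddCommGroup E] [NormedSpace ℝ E] [Nontrivial E]
    [MeasurableSpace E] {μ : Measure E} [μ.IsOpenPosMeasure] {𝓔 : Set (Set E)}
    (hball : ∀ (x : E) (r : ℝ), 0 < r → closedBall x r ∈ 𝓔) {D : Set E → Set E}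
    (hmono : ∀ A ∈ 𝓔, ∀ B ∈ 𝓔, A ≤ᵐ[μ] B → D A ≤ᵐ[μ] D B) {ψ : ℝ → E → E}
    (hψ : ∀ (x : E) (r : ℝ), 0 < r → D (closedBall x r) =ᵐ[μ] closedBall (ψ r x) r) :
    BallMonotone ψ := by
  intro x y r s hr hs hxy
  have hsub : closedBall x r ⊆ closedBall y s := closedBall_subset_closedBall' (by linarith)
  have hD := hmono _ (hball x r hr) _ (hball y s hs) hsub.eventuallyLE
  exact dist_le_sub_of_closedBall_ae_le_closedBall hr
    ((hψ x r hr).symm.trans_le (hD.trans_eq (hψ y s hs)))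

theorem dist_le_abs_sub {X : Type*} [PseudoMetricSpace X] {ψ : ℝ → X → X} (hψ : BallMonotone ψ)
    {x y : X} {r s : ℝ} (hr : 0 < r) (hs : 0 < s) (hxy : dist x y ≤ |s - r|) :
    dist (ψ r x) (ψ s y) ≤ |s - r| := by
  rcases le_total r s with h | h
  · rw [abs_of_nonneg (sub_nonneg.mpr h)] at hxy ⊢
    exact hψ hr hs hxy
  · rw [abs_sub_comm, abs_of_nonneg (sub_nonneg.mpr h), dist_comm] at hxy ⊢
    exact hψ hs hr hxy

theorem lipschitzWith {E : Type*} [NormedAddCommGroup E] [NormedSpace ℝ E] {ψ : ℝ → E → E}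
    (hψ : BallMonotone ψ) {r : ℝ} (hr : 0 < r) : LipschitzWith 1 (ψ r) := by
  refine LipschitzWith.mk_one fun x y ↦ ?_
  -- Both balls lie in the ball of radius `r + dist x y / 2` about the midpoint.
  have hs : 0 < r + dist x y / 2 := by positivity
  have hx := hψ (x := x) (y := midpoint ℝ x y) hr hs
    (by rw [dist_left_midpoint, Real.norm_two]; linarith)
  have hy := hψ (x := y) (y := midpoint ℝ x y) hr hs
    (by rw [dist_right_midpoint, Real.norm_two]; linarith)
  linarith [dist_triangle_right (ψ r x) (ψ r y) (ψ (r + dist x y / 2) (midpoint ℝ x y))]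

variable {E : Type*} [NormedAddCommGroup E] [InnerProductSpace ℝ E] {ψ : ℝ → E → E} {r s : ℝ}

theorem eq_self_of_fixes_add_of_fixes_sub (hψ : BallMonotone ψ) (hr : 0 < r) (hs : 0 < s)
    {x w : E} (hw : ‖w‖ = |s - r|) (hadd : ψ r (x + w) = x + w) (hsub : ψ r (x - w) = x - w) :
    ψ s x = x := by
  have hplus : dist (x + w) (ψ s x) ≤ ‖w‖ := by
    rw [hw, ← hadd]
    exact hψ.dist_le_abs_sub hr hs (by rw [dist_self_add_left, hw])
  have hminus : dist (x - w) (ψ s x) ≤ ‖w‖ := by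
    rw [hw, ← hsub]
    exact hψ.dist_le_abs_sub hr hs (by rw [dist_self_sub_left, hw])
  rw [dist_comm, dist_eq_norm] at hplus hminus
  refine sub_eq_zero.mp (eq_zero_of_norm_sub_le_of_norm_add_le (w := w) ?_ ?_)
  · rwa [sub_sub]
  · rwa [sub_add]

variable {z v : E}

theorem fixes_line (hψ : BallMonotone ψ) (hr : 0 < r) (hs : 0 < s) (hv : v ≠ 0)
    (hfix : ∀ t : ℝ, ψ r (z + t • v) = z + t • v) (t : ℝ) : ψ s (z + t • v) = z + t • v := by
  obtain ⟨k, hk⟩ : ∃ k : ℝ, ‖k • v‖ = |s - r| := exists_norm_smul_eq_abs hv (s - r)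
  refine hψ.eq_self_of_fixes_add_of_fixes_sub hr hs hk ?_ ?_
  · rw [add_assoc, ← add_smul, hfix]
  · rw [add_sub_assoc, ← sub_smul, hfix]

theorem eq_of_fixes_line (hψ : BallMonotone ψ) {r₀ : ℝ} (hr₀ : 0 < r₀) (hv : v ≠ 0)
    (hfix : ∀ t : ℝ, ψ r₀ (z + t • v) = z + t • v) (hr : 0 < r) (hs : 0 < s) : ψ r = ψ s := by
  obtain ⟨k, hk⟩ : ∃ k : ℝ, ‖k • v‖ = |s - r| := exists_norm_smul_eq_abs hv (s - r)
  have horth {q : ℝ} (hq : 0 < q) (x : E) : ⟪ψ q x - x, k • v⟫ = 0 := by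
    rw [real_inner_smul_right, inner_sub_eq_zero_of_lipschitzWith_of_fixes_line
      (hψ.lipschitzWith hq) (hψ.fixes_line hr₀ hq hv hfix), mul_zero]
  funext x
  have hrs : ‖ψ r x - ψ s (x + k • v)‖ ≤ ‖k • v‖ := by
    rw [← dist_eq_norm, hk]
    exact hψ.dist_le_abs_sub hr hs (by rw [dist_self_add_right, hk])
  have hss : ‖ψ s x - ψ s (x + k • v)‖ ≤ ‖k • v‖ := by
    simpa only [dist_eq_norm, NNReal.coe_one, one_mul, sub_add_cancel_left, norm_neg]
      using (hψ.lipschitzWith hs).dist_le_mul x (x + k • v)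
  refine sub_left_injective (b := x) ?_
  calc ψ r x - x = ψ s (x + k • v) - (x + k • v) :=
        sub_eq_sub_of_inner_eq_zero_of_norm_sub_le (horth hr x) (horth hs _) hrs
    _ = ψ s x - x :=
        (sub_eq_sub_of_inner_eq_zero_of_norm_sub_le (horth hs x) (horth hs _) hss).symm

end BallMonotone

end BallMonotone

section Cylinder

/-- The cylinder `B + Kᗮ` over the ball `B` of center `c` and radius `ρ` in the affine subspace
`c + K`. -/
def ballCylinder {E : Type*} [NormedAddCommGroup E] [InnerProductSpace ℝ E] (K : Submodule ℝ E)
    [K.HasOrthogonalProjection] (c : E) (ρ : ℝ) : Set E :=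
  {y | ‖K.starProjection (y - c)‖ ≤ ρ}

theorem cyl_eq_ballCylinder {n : ℕ} {u : Euc n} (hu : ‖u‖ = 1) (c : Euc n) (ρ : ℝ) :
    cyl u c ρ = ballCylinder (ℝ ∙ u)ᗮ c ρ := by
  ext y
  rw [cyl, ballCylinder, Set.mem_ofPred_eq, Set.mem_ofPred_eq,
    Submodule.starProjection_orthogonal_val, Submodule.starProjection_unit_singleton ℝ hu,
    real_inner_comm]

variable {E : Type*} [NormedAddCommGroup E] [InnerProductSpace ℝ E] {K : Submodule ℝ E}
  [K.HasOrthogonalProjection] {c : E} {ρ : ℝ}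

theorem inner_starProjection_left_of_mem {v : E} (hv : v ∈ K) (x : E) :
    ⟪K.starProjection x, v⟫ = ⟪x, v⟫ := by
  rw [Submodule.inner_starProjection_left_eq_right, Submodule.starProjection_eq_self_iff.mpr hv]

theorem inner_le_of_mem_ballCylinder {a v : E} (ha : a ∈ ballCylinder K c ρ) (hvK : v ∈ K)
    (hv : ‖v‖ = 1) : ⟪a - c, v⟫ ≤ ρ :=
  calc ⟪a - c, v⟫ = ⟪K.starProjection (a - c), v⟫ := (inner_starProjection_left_of_mem hvK _).symm
    _ ≤ ‖K.starProjection (a - c)‖ := by simpa only [hv, mul_one] using real_inner_le_norm _ v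
    _ ≤ ρ := ha

theorem exists_lt_inner_of_notMem_ballCylinder (hρ : 0 ≤ ρ) {y : E} (hy : y ∉ ballCylinder K c ρ) :
    ∃ v ∈ K, ‖v‖ = 1 ∧ ρ < ⟪y - c, v⟫ := by
  set w := K.starProjection (y - c)
  have hρw : ρ < ‖w‖ := not_le.mp hy
  have hwK : w ∈ K := K.starProjection_apply_mem _
  have hw0 : ‖w‖ ≠ 0 := (hρ.trans_lt hρw).ne'
  refine ⟨‖w‖⁻¹ • w, K.smul_mem _ hwK, norm_smul_inv_norm (𝕜 := ℝ) (norm_ne_zero_iff.mp hw0), ?_⟩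
  have hinner : ⟪y - c, w⟫ = ‖w‖ ^ 2 := by
    rw [← inner_starProjection_left_of_mem hwK, real_inner_self_eq_norm_sq]
  rwa [real_inner_smul_right, hinner, sq, inv_mul_cancel_left₀ hw0]

theorem exists_closedBall_of_notMem_ballCylinder (hρ : 0 ≤ ρ) {A : Set E}
    (hA : Bornology.IsBounded A) (hAc : A ⊆ ballCylinder K c ρ) {y : E}
    (hy : y ∉ ballCylinder K c ρ) (p : E) :
    ∃ w ∈ K, ∃ R : ℝ, 0 < R ∧ A ⊆ closedBall (p + w) R ∧ y ∉ closedBall (p + w) R := by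
  obtain ⟨v, hvK, hv, hyv⟩ := exists_lt_inner_of_notMem_ballCylinder hρ hy
  obtain ⟨β, hρβ, hβy⟩ := exists_between hyv
  set q := K.starProjection (c - p)
  have hinner (a : E) : ⟪a - (p + q), v⟫ = ⟪a - c, v⟫ := by
    rw [show a - (p + q) = a - c + (c - p - q) by abel, inner_add_left,
      K.starProjection_inner_eq_zero _ v hvK, add_zero]
  have hAv : ∀ a ∈ A, ⟪a - (p + q), v⟫ ≤ ρ := fun a ha ↦
    (hinner a).trans_le (inner_le_of_mem_ballCylinder (hAc ha) hvK hv)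
  obtain ⟨k, hAk, hk⟩ := ((eventually_subset_closedBall_sub_smul hA hv hAv hρβ).and
    (eventually_ge_atTop 0)).exists
  have hcenter : p + (q - k • v) = p + q - k • v := (add_sub_assoc p q _).symm
  refine ⟨q - k • v, K.sub_mem (K.starProjection_apply_mem _) (K.smul_mem k hvK), k + β,
    by linarith, ?_, ?_⟩
  · rwa [hcenter]
  · rw [hcenter]
    exact notMem_closedBall_sub_smul hv ((hinner y).symm ▸ hβy) k

theorem ae_le_ballCylinder_of_forall_closedBall [SecondCountableTopology E] [MeasurableSpace E]
    {μ : Measure E} (hρ : 0 ≤ ρ) {A S : Set E} (hA : Bornology.IsBounded A)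
    (hAc : A ≤ᵐ[μ] ballCylinder K c ρ) (p : E)
    (hS : ∀ w ∈ K, ∀ R : ℝ, 0 < R → A ≤ᵐ[μ] closedBall (p + w) R → S ≤ᵐ[μ] closedBall (p + w) R) :
    S ≤ᵐ[μ] ballCylinder K c ρ := by
  refine ae_le_of_forall_notMem_exists_isClosed fun y hy ↦ ?_
  obtain ⟨w, hwK, R, hR, hAR, hyR⟩ := exists_closedBall_of_notMem_ballCylinder hρ
    (hA.subset Set.inter_subset_left) (Set.inter_subset_right (s := A)) hy p
  have hAball : A ≤ᵐ[μ] closedBall (p + w) R := hAc.mono fun _ hx hxA ↦ hAR ⟨hxA, hx hxA⟩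
  exact ⟨closedBall (p + w) R, isClosed_closedBall, hyR, hS w hwK R hR hAball⟩

end Cylinder

theorem isConvexBody_closedBall {n : ℕ} (x : Euc n) {r : ℝ} (hr : 0 < r) :
    isConvexBody (closedBall x r) :=
  ⟨isCompact_closedBall x r, convex_closedBall x r,
    ⟨x, ball_subset_interior_closedBall (mem_ball_self hr)⟩⟩

theorem one_lt_rank_euc {n : ℕ} (hn : 2 ≤ n) : 1 < Module.rank ℝ (Euc n) := by
  rw [← Nat.cast_one]
  exact Module.lt_rank_of_lt_finrank (by rwa [finrank_euclideanSpace_fin])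

theorem stmt2_general {E : Type*} [NormedAddCommGroup E] [InnerProductSpace ℝ E]
    [SecondCountableTopology E] [MeasurableSpace E] {μ : Measure E} [μ.IsOpenPosMeasure]
    {𝓔 : Set (Set E)} (hball : ∀ (x : E) (r : ℝ), 0 < r → closedBall x r ∈ 𝓔)
    {D : Set E → Set E} (hmono : ∀ A ∈ 𝓔, ∀ B ∈ 𝓔, A ≤ᵐ[μ] B → D A ≤ᵐ[μ] D B)
    {ψ : ℝ → E → E}
    (hψ : ∀ (x : E) (r : ℝ), 0 < r → D (closedBall x r) =ᵐ[μ] closedBall (ψ r x) r)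
    {K : Submodule ℝ E} [K.HasOrthogonalProjection] (hK : K ≠ ⊥) {p : E} {r₀ : ℝ} (hr₀ : 0 < r₀)
    (hid : ∀ w ∈ K, ψ r₀ (p + w) = p + w) :
    (∀ A ∈ 𝓔, Bornology.IsBounded A → ∀ (c : E) (ρ : ℝ), 0 ≤ ρ →
        A ≤ᵐ[μ] ballCylinder K c ρ → D A ≤ᵐ[μ] ballCylinder K c ρ) ∧
    (∀ r s : ℝ, 0 < r → 0 < s → ψ r = ψ s) := by
  obtain ⟨v, hvK, hv⟩ := Submodule.exists_mem_ne_zero_of_ne_bot hK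
  have : Nontrivial E := nontrivial_of_ne v 0 hv
  have hconst (r s : ℝ) (hr : 0 < r) (hs : 0 < s) : ψ r = ψ s :=
    (BallMonotone.of_ae_mono hball hmono hψ).eq_of_fixes_line hr₀ hv
      (fun t ↦ hid _ (K.smul_mem t hvK)) hr hs
  refine ⟨fun A hA hAb c ρ hρ hAc ↦ ?_, hconst⟩
  refine ae_le_ballCylinder_of_forall_closedBall hρ hAb hAc p fun w hwK R hR hAR ↦ ?_
  have hfix : ψ R (p + w) = p + w := by rw [hconst R r₀ hR hr₀, hid w hwK]
  have hDball : D (closedBall (p + w) R) =ᵐ[μ] closedBall (p + w) R := by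
    simpa only [hfix] using hψ (p + w) R hR
  exact (hmono A hA _ (hball _ R hR) hAR).trans_eq hDball

/-- Lemma 4.4(ii): if the contraction `ψ_{∂,r₀}` restricted to the hyperplane
`H = u⊥ + t₀u` is the identity for some `r₀ > 0`, then `∂` restricted to the
convex bodies respects `H`-cylinders, and `ψ_{∂,r}` is independent of `r > 0`. -/
theorem stmt2 {n : ℕ} (hn : 2 ≤ n)
    (𝓔 : Set (Set (Euc n)))
    (h𝓔meas : ∀ A ∈ 𝓔, MeasurableSet A ∧ volume A ≠ ⊤)
    (hK𝓔 : ∀ A : Set (Euc n), isConvexBody A → A ∈ 𝓔)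
    (D : Set (Euc n) → Set (Euc n))
    (hDmeas : ∀ A ∈ 𝓔, MeasurableSet (D A) ∧ volume (D A) ≠ ⊤)
    (hmono : ∀ A ∈ 𝓔, ∀ B ∈ 𝓔, essSub A B → essSub (D A) (D B))
    (hmeaspres : ∀ A ∈ 𝓔, volume (D A) = volume A)
    (hballs : ∀ A ∈ 𝓔, (∃ (x : Euc n) (r : ℝ), 0 < r ∧ essEq A (closedBall x r)) →
        ∃ (x' : Euc n) (r' : ℝ), 0 < r' ∧ essEq (D A) (closedBall x' r'))
    (ψ : ℝ → Euc n → Euc n)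
    (hψlip : ∀ r : ℝ, 0 < r → LipschitzWith 1 (ψ r))
    (hψ : ∀ (x : Euc n) (r : ℝ), 0 < r →
        essEq (D (closedBall x r)) (closedBall (ψ r x) r))
    (u : Euc n) (hu : ‖u‖ = 1) (t₀ : ℝ)
    (r₀ : ℝ) (hr₀ : 0 < r₀)
    (hid : ∀ x : Euc n, ⟪x, u⟫ = t₀ → ψ r₀ x = x) :
    (∀ A : Set (Euc n), isConvexBody A → ∀ (c : Euc n) (ρ : ℝ), 0 < ρ →
        essSub A (cyl u c ρ) → essSub (D A) (cyl u c ρ)) ∧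
    (∀ r r' : ℝ, 0 < r → 0 < r' → ψ r = ψ r') := by
  obtain ⟨hcyl, hconst⟩ := stmt2_general (μ := volume) (p := t₀ • u)
    (fun x r hr ↦ hK𝓔 _ (isConvexBody_closedBall x hr))
    (fun A hA B hB h ↦ essSub_iff_ae_le.mp (hmono A hA B hB (essSub_iff_ae_le.mpr h)))
    (fun x r hr ↦ essEq_iff_ae_eq.mp (hψ x r hr))
    (orthogonal_span_singleton_ne_bot (one_lt_rank_euc hn) u) hr₀
    (fun w hw ↦ hid _ (inner_smul_add_left_of_mem_orthogonal hu hw t₀))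
  simp only [essSub_iff_ae_le, cyl_eq_ballCylinder hu]
  exact ⟨fun A hA c ρ hρ ↦ hcyl A (hK𝓔 A hA) hA.1.isBounded c ρ hρ.le, hconst⟩
end
end

section
/- Let C be a body (a compact set equal to the closure of its interior) in ℝⁿ, n ≥ 1, and let ψ_k : ℝⁿ → ℝⁿ, k ∈ ℕ, be contractions. The following are equivalent: (i) the sequence (ψ_k) converges pointwise on C; (ii) (ψ_k) converges uniformly on C; (iii) (ψ_k) converges in L¹ on C, i.e., there is a function ψ with ∫_C ‖ψ_k(x) − ψ(x)‖ dx → 0. -/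
open MeasureTheory Metric Filter Topology

noncomputable section

/-!
On a compact set an equicontinuous family that converges pointwise converges uniformly, and
uniform convergence on a set of finite measure implies convergence in `L¹`. For the way back, `L¹`
convergence gives convergence in measure. Let `F i` stay within `ε / 4` of `F i x` on a
neighbourhood `U` of `x` in `C`, for all `i`. If the sets where `F i` and `F j` are `ε / 4`-far
from the limit have total measure less than that of `U`, then some point of `U` avoids both, and
it witnesses `dist (F i x) (F j x) < ε`. So `F` is Cauchy at every point all of whose
neighbourhoods in `C` have positive measure, and in a body every point is of this kind.
-/

section Integral

variable {ι X E : Type*} {l : Filter ι} [MeasurableSpace X] {μ : Measure X} [NormedAddCommGroup E]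
  {F : ι → X → E} {f : X → E}

theorem tendsto_setIntegral_norm_sub_of_tendstoUniformlyOn {s : Set X} (hs : μ s < ⊤)
    (h : TendstoUniformlyOn F f l s) : Tendsto (fun i => ∫ x in s, ‖F i x - f x‖ ∂μ) l (𝓝 0) := by
  refine Metric.tendsto_nhds.2 fun ε hε => ?_
  obtain ⟨δ, hδ, hδε⟩ := exists_pos_mul_lt hε (μ.real s)
  filter_upwards [Metric.tendstoUniformlyOn_iff.1 h δ hδ] with i hi
  have hbound : ‖∫ x in s, ‖F i x - f x‖ ∂μ‖ ≤ δ * μ.real s :=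
    norm_setIntegral_le_of_norm_le_const hs fun x hx => by
      rw [norm_norm, ← dist_eq_norm, dist_comm]
      exact (hi x hx).le
  rw [dist_zero_right]
  linarith

theorem tendstoInMeasure_of_tendsto_integral_norm_sub (hF : ∀ i, Integrable (F i) μ)
    (hf : Integrable f μ) (h : Tendsto (fun i => ∫ x, ‖F i x - f x‖ ∂μ) l (𝓝 0)) :
    TendstoInMeasure μ F l f := by
  refine tendstoInMeasure_of_tendsto_eLpNorm one_ne_zero
    (fun i => (hF i).aestronglyMeasurable) hf.aestronglyMeasurable ?_
  have heLp : ∀ i, eLpNorm (F i - f) 1 μ = ENNReal.ofReal (∫ x, ‖F i x - f x‖ ∂μ) := fun i => by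
    rw [eLpNorm_one_eq_lintegral_enorm]
    exact (ofReal_integral_norm_eq_lintegral_enorm ((hF i).sub hf)).symm
  simpa only [heLp, ENNReal.ofReal_zero] using ENNReal.tendsto_ofReal h

end Integral

section Equicontinuous

variable {ι X α : Type*} {l : Filter ι} [TopologicalSpace X]

theorem tendstoUniformlyOn_iff_forall_tendsto_of_equicontinuousOn [UniformSpace α]
    {F : ι → X → α} {f : X → α} {K : Set X} (hK : IsCompact K) (hF : EquicontinuousOn F K) :
    TendstoUniformlyOn F f l K ↔ ∀ x ∈ K, Tendsto (F · x) l (𝓝 (f x)) := by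
  have ascoli := EquicontinuousOn.tendsto_uniformOnFun_iff_pi' (𝔖 := {K})
    (by simpa using hK) (by simpa using hF) l f
  simpa [UniformOnFun.tendsto_iff_tendstoUniformlyOn, Function.comp_def, tendsto_pi_nhds]
    using ascoli

variable [MeasurableSpace X] [OpensMeasurableSpace X] {μ : Measure X}

theorem closure_interior_subset_support_restrict [μ.IsOpenPosMeasure]
    (s : Set X) : closure (interior s) ⊆ (μ.restrict s).support :=
  closure_minimal (by simpa [Measure.support_eq_univ] using μ.interior_inter_support (s := s))
    Measure.isClosed_support

theorem measure_restrict_pos_of_mem_nhdsWithin {s U : Set X} {x : X}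
    (hx : x ∈ (μ.restrict s).support) (hU : U ∈ 𝓝[s] x) : 0 < μ.restrict s U := by
  have hpos : ∀ V ∈ 𝓝[s] x, 0 < μ V :=
    ((𝓝[s] x).basis_sets.frequently_smallSets pos_mono).1 (Measure.mem_support_restrict.1 hx)
  exact (hpos _ (inter_mem hU self_mem_nhdsWithin)).trans_le (Measure.le_restrict_apply s U)

theorem cauchy_map_of_equicontinuousWithinAt_of_tendstoInMeasure
    [PseudoMetricSpace α] [l.NeBot] {F : ι → X → α} {f : X → α} {s : Set X} {x : X}
    (hF : EquicontinuousWithinAt F s x) (hx : x ∈ (μ.restrict s).support)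
    (hf : TendstoInMeasure (μ.restrict s) F l f) : Cauchy (map (F · x) l) := by
  refine Metric.cauchy_iff.2 ⟨inferInstance, fun ε hε => ?_⟩
  have hε4 : 0 < ε / 4 := by positivity
  set U := {z | ∀ i, dist (F i x) (F i z) < ε / 4}
  have hU : 0 < μ.restrict s U :=
    measure_restrict_pos_of_mem_nhdsWithin hx (hF _ (dist_mem_uniformity hε4))
  let bad (i : ι) : Set X := {z | ε / 4 ≤ dist (F i z) (f z)}
  have hbad : ∀ᶠ i in l, μ.restrict s (bad i) < μ.restrict s U / 2 :=
    (tendstoInMeasure_iff_dist.1 hf _ hε4).eventually_lt_const (ENNReal.half_pos hU.ne')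
  refine ⟨_, image_mem_map hbad, ?_⟩
  rintro _ ⟨i, hi, rfl⟩ _ ⟨j, hj, rfl⟩
  have hlt : μ.restrict s (bad i ∪ bad j) < μ.restrict s U := calc
    _ ≤ μ.restrict s (bad i) + μ.restrict s (bad j) := measure_union_le _ _
    _ < μ.restrict s U / 2 + μ.restrict s U / 2 := ENNReal.add_lt_add hi hj
    _ = μ.restrict s U := ENNReal.add_halves _
  obtain ⟨z, hzU, hz⟩ : ∃ z ∈ U, z ∉ bad i ∪ bad j :=
    Set.not_subset.1 fun h => (measure_mono h).not_gt hlt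
  have hzi : dist (F i z) (f z) < ε / 4 := not_le.1 fun h => hz (.inl h)
  have hzj : dist (F j z) (f z) < ε / 4 := not_le.1 fun h => hz (.inr h)
  calc dist (F i x) (F j x)
      ≤ dist (F i x) (F i z) + dist (F i z) (F j z) + dist (F j z) (F j x) := dist_triangle4 ..
    _ ≤ dist (F i x) (F i z) + (dist (F i z) (f z) + dist (F j z) (f z))
          + dist (F j x) (F j z) := by
        gcongr
        · exact dist_triangle_right ..
        · exact (dist_comm ..).le
    _ < ε := by linarith [hzU i, hzU j]

end Equicontinuous

theorem stmt3_general {ι X E : Type*} {l : Filter ι} [l.NeBot] [TopologicalSpace X] [T2Space X]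
    [MeasurableSpace X] [OpensMeasurableSpace X] {μ : Measure X} [IsFiniteMeasureOnCompacts μ]
    [NormedAddCommGroup E] [CompleteSpace E] {F : ι → X → E} {C : Set X} (hC : IsCompact C)
    (hsupp : C ⊆ (μ.restrict C).support) (hF : EquicontinuousOn F C) :
    List.TFAE [∃ f : X → E, ∀ x ∈ C, Tendsto (F · x) l (𝓝 (f x)),
      ∃ f : X → E, TendstoUniformlyOn F f l C,
      ∃ f : X → E, IntegrableOn f C μ ∧
        Tendsto (fun i => ∫ x in C, ‖F i x - f x‖ ∂μ) l (𝓝 0)] := by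
  have hcont : ∀ i, ContinuousOn (F i) C := hF.continuousOn
  tfae_have 1 → 2
  | ⟨f, hf⟩ => ⟨f, (tendstoUniformlyOn_iff_forall_tendsto_of_equicontinuousOn hC hF).2 hf⟩
  tfae_have 2 → 3
  | ⟨f, hf⟩ => ⟨f, (hf.continuousOn (.of_forall hcont)).integrableOn_compact hC,
      tendsto_setIntegral_norm_sub_of_tendstoUniformlyOn hC.measure_lt_top hf⟩
  tfae_have 3 → 1 := by
    rintro ⟨f, hfint, hf⟩
    have hmeas : TendstoInMeasure (μ.restrict C) F l f :=
      tendstoInMeasure_of_tendsto_integral_norm_sub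
        (fun i => (hcont i).integrableOn_compact hC) hfint hf
    have hlim : ∀ x ∈ C, ∃ a, Tendsto (F · x) l (𝓝 a) := fun x hx =>
      CompleteSpace.complete <|
        cauchy_map_of_equicontinuousWithinAt_of_tendstoInMeasure (hF x hx) (hsupp hx) hmeas
    choose! g hg using hlim
    exact ⟨g, hg⟩
  tfae_finish

/-- Lemma 4.6: for a sequence of contractions and a body `C` (a compact set equal to the
closure of its interior), pointwise convergence on `C`, uniform convergence on `C`, and
`L¹` convergence on `C` are all equivalent. -/
theorem stmt3 {n : ℕ} (hn : 1 ≤ n) (C : Set (Euc n))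
    (hCcompact : IsCompact C) (hCbody : C = closure (interior C))
    (ψ : ℕ → Euc n → Euc n) (hψ : ∀ k, LipschitzWith 1 (ψ k)) :
    ((∃ f : Euc n → Euc n, ∀ x ∈ C, Tendsto (fun k => ψ k x) atTop (𝓝 (f x))) ↔
      (∃ f : Euc n → Euc n, TendstoUniformlyOn ψ f atTop C)) ∧
    ((∃ f : Euc n → Euc n, TendstoUniformlyOn ψ f atTop C) ↔
      (∃ f : Euc n → Euc n, IntegrableOn f C ∧
        Tendsto (fun k => ∫ x in C, ‖ψ k x - f x‖) atTop (𝓝 0))) := by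
  have htfae := stmt3_general (l := atTop) (μ := volume) hCcompact
    (hCbody.subset.trans (closure_interior_subset_support_restrict C))
    ((LipschitzWith.uniformEquicontinuous ψ 1 hψ).equicontinuous.equicontinuousOn C)
  exact ⟨htfae.out 0 1, htfae.out 1 2⟩
end
end

section
/- Let φ : ℝ → ℝ be a contraction (1-Lipschitz function) and suppose there exists a point s₀ ∈ ℝ at which φ is differentiable with φ′(s₀) ∉ {0, 1, −1}. Then φ does not belong to the class ℐ. -/
open Filter Topology

noncomputable section

/-- The class `ℐ` of contractions `φ : ℝ → ℝ` such that whenever `a < b` and `φ(s)` lies in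
the open interval with endpoints `φ(a)` and `φ(b)` for every `s ∈ (a,b)`, then
`|φ(b) − φ(a)| = b − a` (equivalently, `φ` is affine with slope `±1` on `(a,b)`). -/
def memI (φ : ℝ → ℝ) : Prop :=
  LipschitzWith 1 φ ∧ ∀ a b : ℝ, a < b →
    (∀ s ∈ Set.Ioo a b, φ s ∈ Set.Ioo (min (φ a) (φ b)) (max (φ a) (φ b))) →
    |φ b - φ a| = b - a

/-!
If the right derivative `d` of `φ` at `s₀` is positive, then `φ > φ s₀` just after `s₀`. Let `b` be
the first time at which `φ` reaches its value at a later point `c`. Then `φ` stays strictly between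
`φ s₀` and `φ b` on `(s₀, b)`, and `b` tends to `s₀` with `c`. For such `b` close to `s₀` the slope
of `φ` over `[s₀, b]` is close to `d`, hence not `±1`. A negative `d` is treated by passing to `-φ`.
-/

section FirstPassage

variable {α β : Type*} [LinearOrder α] [TopologicalSpace α]
  [LinearOrder β] [TopologicalSpace β] [ClosedIciTopology β] {f : α → β} {a c : α}

theorem exists_mem_Ioc_forall_mem_Ico_lt [OrderClosedTopology α] [CompactIccSpace α] (hac : a ≤ c)
    (hf : ContinuousOn f (Set.Icc a c)) (hlt : f a < f c) :
    ∃ b ∈ Set.Ioc a c, ∀ s ∈ Set.Ico a b, f s < f b := by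
  have hcompact : IsCompact (Set.Icc a c ∩ f ⁻¹' Set.Ici (f c)) :=
    isCompact_Icc.of_isClosed_subset (hf.preimage_isClosed_of_isClosed isClosed_Icc isClosed_Ici)
      Set.inter_subset_left
  obtain ⟨b, ⟨⟨hab, hbc⟩, hcb : f c ≤ f b⟩, hleast⟩ :=
    hcompact.exists_isLeast ⟨c, Set.right_mem_Icc.2 hac, le_rfl⟩
  have hne : a ≠ b := by
    rintro rfl
    exact hlt.not_ge hcb
  refine ⟨b, ⟨hab.lt_of_ne hne, hbc⟩, fun s hs => ?_⟩
  by_contra! hbs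
  exact hs.2.not_ge (hleast ⟨⟨hs.1, hs.2.le.trans hbc⟩, hcb.trans hbs⟩)

theorem frequently_nhdsGT_forall_mem_Ioo [OrderTopology α] [CompactIccSpace α] [DenselyOrdered α]
    (hac : a < c) (hf : ContinuousOn f (Set.Icc a c)) (hlt : ∀ᶠ s in 𝓝[>] a, f a < f s) :
    ∃ᶠ b in 𝓝[>] a, ∀ s ∈ Set.Ioo a b, f s ∈ Set.Ioo (f a) (f b) := by
  rw [(nhdsGT_basis_of_exists_gt ⟨c, hac⟩).frequently_iff]
  intro u hau
  obtain ⟨v, hav, hv⟩ := (mem_nhdsGT_iff_exists_Ioo_subset' hac).1 hlt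
  obtain ⟨w, haw, hw⟩ := exists_between (lt_min hac (lt_min hau hav))
  obtain ⟨hwc, hwu, hwv⟩ : w < c ∧ w < u ∧ w < v := by simpa only [lt_min_iff] using hw
  obtain ⟨b, hb, hfirst⟩ := exists_mem_Ioc_forall_mem_Ico_lt haw.le
    (hf.mono (Set.Icc_subset_Icc_right hwc.le)) (hv ⟨haw, hwv⟩)
  exact ⟨b, ⟨hb.1, hb.2.trans_lt hwu⟩, fun s hs =>
    ⟨hv ⟨hs.1, hs.2.trans (hb.2.trans_lt hwv)⟩, hfirst s ⟨hs.1.le, hs.2⟩⟩⟩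

end FirstPassage

section RightDerivative

section NormedSpace

variable {E : Type*} [NormedAddCommGroup E] [NormedSpace ℝ E] {f : ℝ → E} {f' : E} {a K : ℝ}

theorem tendsto_slope_nhdsGT (hf : HasDerivWithinAt f f' (Set.Ioi a) a) :
    Tendsto (slope f a) (𝓝[>] a) (𝓝 f') :=
  (hasDerivWithinAt_iff_tendsto_slope' Set.self_notMem_Ioi).1 hf

theorem eventually_nhdsGT_norm_sub_ne (hf : HasDerivWithinAt f f' (Set.Ioi a) a)
    (hK : ‖f'‖ ≠ K) : ∀ᶠ b in 𝓝[>] a, ‖f b - f a‖ ≠ K * (b - a) := by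
  filter_upwards [(tendsto_slope_nhdsGT hf).norm.eventually_ne hK, self_mem_nhdsWithin]
    with b hslope (hab : a < b) heq
  refine hslope ?_
  have hpos : 0 < b - a := sub_pos.2 hab
  rw [slope_def_module, norm_smul, heq, norm_inv, Real.norm_of_nonneg hpos.le]
  field_simp

end NormedSpace

variable {f : ℝ → ℝ} {f' a c : ℝ}

theorem eventually_nhdsGT_lt_of_deriv_pos (hf : HasDerivWithinAt f f' (Set.Ioi a) a)
    (hpos : 0 < f') : ∀ᶠ s in 𝓝[>] a, f a < f s := by
  filter_upwards [(tendsto_slope_nhdsGT hf).eventually_const_lt hpos, self_mem_nhdsWithin]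
    with s hslope has
  exact (slope_pos_iff_of_le has.le).1 hslope

theorem frequently_nhdsGT_forall_mem_uIoo_of_deriv_ne_zero (hac : a < c)
    (hcont : ContinuousOn f (Set.Icc a c)) (hf : HasDerivWithinAt f f' (Set.Ioi a) a)
    (hne : f' ≠ 0) :
    ∃ᶠ b in 𝓝[>] a, ∀ s ∈ Set.Ioo a b, f s ∈ Set.uIoo (f a) (f b) := by
  rcases hne.lt_or_gt with hneg | hpos
  · have hlt := eventually_nhdsGT_lt_of_deriv_pos hf.neg (neg_pos.2 hneg)
    refine (frequently_nhdsGT_forall_mem_Ioo hac hcont.neg hlt).mono fun b hb s hs => ?_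
    exact Set.Ioo_subset_uIoo' ⟨neg_lt_neg_iff.1 (hb s hs).2, neg_lt_neg_iff.1 (hb s hs).1⟩
  · have hlt := eventually_nhdsGT_lt_of_deriv_pos hf hpos
    exact (frequently_nhdsGT_forall_mem_Ioo hac hcont hlt).mono fun b hb s hs =>
      Set.Ioo_subset_uIoo (hb s hs)

end RightDerivative

theorem stmt4_general {φ : ℝ → ℝ} {s₀ r d : ℝ} (hr : s₀ < r)
    (hcont : ContinuousOn φ (Set.Icc s₀ r)) (hderiv : HasDerivWithinAt φ d (Set.Ioi s₀) s₀)
    (hd0 : d ≠ 0) (hd1 : |d| ≠ 1) :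
    ∃ b > s₀, (∀ s ∈ Set.Ioo s₀ b, φ s ∈ Set.uIoo (φ s₀) (φ b)) ∧ |φ b - φ s₀| ≠ b - s₀ := by
  have hbetween := frequently_nhdsGT_forall_mem_uIoo_of_deriv_ne_zero hr hcont hderiv hd0
  have hslope := eventually_nhdsGT_norm_sub_ne hderiv hd1
  obtain ⟨b, ⟨hb, hne⟩, hlt⟩ :=
    ((hbetween.and_eventually hslope).and_eventually self_mem_nhdsWithin).exists
  exact ⟨b, hlt, hb, by simpa only [Real.norm_eq_abs, one_mul] using hne⟩

/-- Lemma 6.7: a contraction which has, at some point, a derivative different from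
`0`, `1` and `-1` does not belong to the class `ℐ`. -/
theorem stmt4 (φ : ℝ → ℝ) (hφ : LipschitzWith 1 φ)
    (s₀ d : ℝ) (hderiv : HasDerivAt φ d s₀)
    (hd0 : d ≠ 0) (hd1 : d ≠ 1) (hdm1 : d ≠ -1) :
    ¬ memI φ := by
  obtain ⟨b, hlt, hb, hne⟩ := stmt4_general (lt_add_one s₀) hφ.continuous.continuousOn
    hderiv.hasDerivWithinAt hd0 (by simp [abs_eq, hd1, hdm1])
  exact fun h => hne (h.2 s₀ b hlt hb)
end
end

section
/- The class ℐ of contractions on ℝ has the following properties: (i) the identity map and t ↦ |t| belong to ℐ; (ii) if φ ∈ ℐ then −φ and s ↦ φ(−s) belong to ℐ; (iii) if φ ∈ ℐ then φ(· + s₀) and φ(·) + s₀ belong to ℐ for every s₀ ∈ ℝ; (iv) if φ₁, φ₂ ∈ ℐ then φ₂ ∘ φ₁ ∈ ℐ; (v) if (φ_k) is a sequence in ℐ converging pointwise to φ, then φ ∈ ℐ. -/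
open Filter Topology

noncomputable section

/-!
Membership of a contraction in `ℐ` can be read off its crossings between two levels: between any
`x` and `y` there must be points `a` and `b`, in either order, such that `φ a = φ x`, `φ b = φ y`
and `φ` preserves the distance from `a` to `b`. Indeed, among all `a`, `b` between `x` and `y` with
these values, a pair at minimal distance has all values in between strictly between `φ x` and
`φ y`. The crossing property is closed under composition, by the intermediate value theorem, and
under pointwise limits, by compactness. Reflections and translations are isometries, so closure
under them is a case of closure under composition.
-/

open Set

variable {ι X α β γ : Type*}

theorem mem_uIcc_or_mem_uIcc_of_notMem_uIoo [LinearOrder α] {a b c : α} (hc : c ∉ uIoo a b) :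
    a ∈ uIcc c b ∨ b ∈ uIcc a c := by
  rw [uIoo, mem_Ioo, inf_lt_iff, lt_sup_iff] at hc
  rw [mem_uIcc, mem_uIcc]
  grind

theorem eq_or_eq_of_mem_uIcc_of_notMem_uIoo [LinearOrder α] {a b c : α} (hc : c ∈ uIcc a b)
    (hc' : c ∉ uIoo a b) : c = a ∨ c = b := by
  rcases mem_uIcc_or_mem_uIcc_of_notMem_uIoo hc' with ha | hb
  · exact .inl (eq_of_mem_uIcc_of_mem_uIcc hc ha)
  · exact .inr (eq_of_mem_uIcc_of_mem_uIcc' hb hc).symm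

theorem ne_of_mapsTo_uIoo [LinearOrder α] [DenselyOrdered α] [LinearOrder β] {f : α → β} {a b : α}
    (hab : a ≠ b) (h : MapsTo f (uIoo a b) (uIoo (f a) (f b))) : f a ≠ f b := by
  intro hf
  obtain ⟨s, hs⟩ : (uIoo a b).Nonempty := nonempty_Ioo.2 (inf_lt_sup.2 hab)
  simpa only [hf, uIoo_self, mem_empty_iff_false] using h hs

theorem eq_left_of_mapsTo_uIoo [LinearOrder α] [LinearOrder β] {f : α → β} {a b c : α}
    (h : MapsTo f (uIoo a b) (uIoo (f a) (f b))) (hf : f a ≠ f b) (hc : c ∈ uIcc a b)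
    (hfc : f c = f a) : c = a := by
  have hc' : c ∉ uIoo a b := fun hc' => left_notMem_uIoo (hfc ▸ h hc')
  rcases eq_or_eq_of_mem_uIcc_of_notMem_uIoo hc hc' with hca | rfl
  · exact hca
  · exact absurd hfc.symm hf

theorem eq_right_of_mapsTo_uIoo [LinearOrder α] [LinearOrder β] {f : α → β} {a b c : α}
    (h : MapsTo f (uIoo a b) (uIoo (f a) (f b))) (hf : f a ≠ f b) (hc : c ∈ uIcc a b)
    (hfc : f c = f b) : c = b := by
  rw [uIoo_comm a, uIoo_comm (f a)] at h
  exact eq_left_of_mapsTo_uIoo h hf.symm (uIcc_comm a b ▸ hc) hfc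

theorem dist_lt_dist_right_of_mem_uIoo {a b s : ℝ} (hs : s ∈ uIoo a b) :
    dist s b < dist a b := by
  rw [uIoo, mem_Ioo, inf_lt_iff, lt_sup_iff] at hs
  rw [Real.dist_eq, Real.dist_eq]
  grind

theorem dist_lt_dist_left_of_mem_uIoo {a b s : ℝ} (hs : s ∈ uIoo a b) : dist a s < dist a b := by
  rw [dist_comm a s, dist_comm a b]
  exact dist_lt_dist_right_of_mem_uIoo (uIoo_comm a b ▸ hs)

theorem exists_mapsTo_uIoo [LinearOrder β] [TopologicalSpace β] [OrderClosedTopology β]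
    {f : ℝ → β} (hf : Continuous f) (x y : ℝ) :
    ∃ a ∈ uIcc x y, ∃ b ∈ uIcc x y, f a = f x ∧ f b = f y ∧
      MapsTo f (uIoo a b) (uIoo (f a) (f b)) := by
  let K : Set (ℝ × ℝ) := uIcc x y ×ˢ uIcc x y ∩ {p | f p.1 = f x ∧ f p.2 = f y}
  have hK : IsCompact K := (isCompact_uIcc.prod isCompact_uIcc).inter_right <|
    (isClosed_eq (hf.comp continuous_fst) continuous_const).inter
      (isClosed_eq (hf.comp continuous_snd) continuous_const)
  obtain ⟨⟨a, b⟩, ⟨⟨ha, hb⟩, hax, hby⟩, hmin⟩ := hK.exists_isMinOn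
    ⟨(x, y), ⟨left_mem_uIcc, right_mem_uIcc⟩, rfl, rfl⟩ continuous_dist.continuousOn
  refine ⟨a, ha, b, hb, hax, hby, fun s hs => ?_⟩
  have hsxy : s ∈ uIcc x y := uIcc_subset_uIcc ha hb (uIoo_subset_uIcc_self hs)
  by_contra hfs
  rcases mem_uIcc_or_mem_uIcc_of_notMem_uIoo hfs with hfa | hfb
  · obtain ⟨t, ht, hfta⟩ := intermediate_value_uIcc hf.continuousOn hfa
    have hle : dist a b ≤ dist t b :=
      hmin (show (t, b) ∈ K from ⟨⟨uIcc_subset_uIcc hsxy hb ht, hb⟩, hfta.trans hax, hby⟩)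
    exact (hle.trans (Real.dist_right_le_of_mem_uIcc ht)).not_gt
      (dist_lt_dist_right_of_mem_uIoo hs)
  · obtain ⟨t, ht, hftb⟩ := intermediate_value_uIcc hf.continuousOn hfb
    have hle : dist a b ≤ dist a t :=
      hmin (show (a, t) ∈ K from ⟨⟨ha, uIcc_subset_uIcc ha hsxy ht⟩, hax, hftb.trans hby⟩)
    exact (hle.trans (Real.dist_left_le_of_mem_uIcc ht)).not_gt
      (dist_lt_dist_left_of_mem_uIoo hs)

theorem tendsto_of_equicontinuousAt [TopologicalSpace X] [UniformSpace α] {F : ι → X → α}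
    {u : ι → X} {x : X} {y : α} {l : Filter ι} (hF : EquicontinuousAt F x)
    (hy : Tendsto (F · x) l (𝓝 y)) (hu : Tendsto u l (𝓝 x)) :
    Tendsto (fun i => F i (u i)) l (𝓝 y) :=
  hy.congr_uniformity fun U hU => (hu.eventually (hF U hU)).mono fun i hi => hi i

/-- Between any `x` and `y` there are points `a` and `b` at which `f` takes the values `f x` and
`f y`, and whose distance is that of these values. For contractions of the real line this
characterizes the class `ℐ`; since `a` and `b` may come in either order, no case distinction
between increasing and decreasing crossings is needed. -/
def HasIsometricCrossings [Lattice α] [Dist α] [Dist β] (f : α → β) : Prop :=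
  ∀ x y, ∃ a ∈ uIcc x y, ∃ b ∈ uIcc x y, f a = f x ∧ f b = f y ∧ dist a b = dist (f x) (f y)

namespace HasIsometricCrossings

theorem comp [ConditionallyCompleteLinearOrder α] [DenselyOrdered α] [PseudoMetricSpace α]
    [OrderTopology α] [LinearOrder β] [PseudoMetricSpace β] [OrderClosedTopology β] [Dist γ]
    {f : α → β} {g : β → γ} (hg : HasIsometricCrossings g) (hf : HasIsometricCrossings f)
    (hfc : Continuous f) : HasIsometricCrossings (g ∘ f) := by
  intro x y
  obtain ⟨u, hu, v, hv, hgu, hgv, huv⟩ := hg (f x) (f y)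
  obtain ⟨x', hx', rfl⟩ := intermediate_value_uIcc hfc.continuousOn hu
  obtain ⟨y', hy', rfl⟩ := intermediate_value_uIcc hfc.continuousOn hv
  obtain ⟨a, ha, b, hb, hfa, hfb, hab⟩ := hf x' y'
  have hsub : uIcc x' y' ⊆ uIcc x y := uIcc_subset_uIcc hx' hy'
  exact ⟨a, hsub ha, b, hsub hb, (congrArg g hfa).trans hgu, (congrArg g hfb).trans hgv,
    hab.trans huv⟩

theorem of_tendsto [LinearOrder α] [PseudoMetricSpace α] [CompactIccSpace α] [MetricSpace β]
    {l : Filter ι} [l.NeBot] {F : ι → α → β} {f : α → β} (hF : ∀ i, HasIsometricCrossings (F i))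
    (hFc : Equicontinuous F) (hf : ∀ x, Tendsto (F · x) l (𝓝 (f x))) :
    HasIsometricCrossings f := by
  intro x y
  choose a ha b hb hax hby hab using fun i => hF i x y
  let u := Ultrafilter.of l
  have hfu (z : α) : Tendsto (F · z) u (𝓝 (f z)) := (hf z).mono_left (Ultrafilter.of_le l)
  obtain ⟨a₀, ha₀, hta⟩ := isCompact_uIcc.ultrafilter_le_nhds' (u.map a)
    (mem_map.2 (Eventually.of_forall ha))
  obtain ⟨b₀, hb₀, htb⟩ := isCompact_uIcc.ultrafilter_le_nhds' (u.map b)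
    (mem_map.2 (Eventually.of_forall hb))
  have hFa : Tendsto (fun i => F i (a i)) u (𝓝 (f a₀)) :=
    tendsto_of_equicontinuousAt (hFc a₀) (hfu a₀) hta
  have hFb : Tendsto (fun i => F i (b i)) u (𝓝 (f b₀)) :=
    tendsto_of_equicontinuousAt (hFc b₀) (hfu b₀) htb
  simp only [hax] at hFa
  simp only [hby] at hFb
  have hdist : Tendsto (fun i => dist (a i) (b i)) u (𝓝 (dist a₀ b₀)) := Tendsto.dist hta htb
  simp only [hab] at hdist
  exact ⟨a₀, ha₀, b₀, hb₀, tendsto_nhds_unique hFa (hfu x), tendsto_nhds_unique hFb (hfu y),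
    tendsto_nhds_unique hdist ((hfu x).dist (hfu y))⟩

end HasIsometricCrossings

theorem memI.dist_eq_of_mapsTo_uIoo {φ : ℝ → ℝ} (hφ : memI φ) {a b : ℝ}
    (h : MapsTo φ (uIoo a b) (uIoo (φ a) (φ b))) : dist a b = dist (φ a) (φ b) := by
  wlog hab : a ≤ b generalizing a b
  · rw [dist_comm a, dist_comm (φ a)]
    exact this (by rwa [uIoo_comm b, uIoo_comm (φ b)]) (le_of_not_ge hab)
  rcases hab.eq_or_lt with rfl | hab
  · rw [dist_self, dist_self]
  · rw [uIoo_of_lt hab] at h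
    rw [dist_comm, Real.dist_eq, abs_of_pos (sub_pos.2 hab), dist_comm, Real.dist_eq]
    exact (hφ.2 a b hab h).symm

theorem memI_iff_hasIsometricCrossings {φ : ℝ → ℝ} :
    memI φ ↔ LipschitzWith 1 φ ∧ HasIsometricCrossings φ := by
  refine ⟨fun hφ => ⟨hφ.1, fun x y => ?_⟩, fun ⟨hlip, hcross⟩ => ⟨hlip, fun a b hab hs => ?_⟩⟩
  · obtain ⟨a, ha, b, hb, hax, hby, hmaps⟩ := exists_mapsTo_uIoo hφ.1.continuous x y
    exact ⟨a, ha, b, hb, hax, hby, hax ▸ hby ▸ hφ.dist_eq_of_mapsTo_uIoo hmaps⟩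
  · have hmaps : MapsTo φ (uIoo a b) (uIoo (φ a) (φ b)) := by rwa [uIoo_of_lt hab]
    have hne : φ a ≠ φ b := ne_of_mapsTo_uIoo hab.ne hmaps
    obtain ⟨a', ha', b', hb', haa', hbb', hdist⟩ := hcross a b
    rw [eq_left_of_mapsTo_uIoo hmaps hne ha' haa', eq_right_of_mapsTo_uIoo hmaps hne hb' hbb']
      at hdist
    rw [← Real.dist_eq, dist_comm, ← hdist, dist_comm, Real.dist_eq, abs_of_pos (sub_pos.2 hab)]

theorem memI_of_isometry {φ : ℝ → ℝ} (hφ : Isometry φ) : memI φ :=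
  ⟨hφ.lipschitz, fun a b hab _ => by
    rw [← Real.dist_eq, hφ.dist_eq, Real.dist_eq, abs_of_pos (sub_pos.2 hab)]⟩

theorem memI_abs : memI fun t : ℝ => |t| := by
  refine ⟨.of_dist_le_mul fun x y => ?_, fun a b hab hs => ?_⟩
  · simpa only [Real.dist_eq, NNReal.coe_one, one_mul] using abs_abs_sub_abs_le x y
  · have h0 : (0 : ℝ) ∉ Ioo a b := fun h => by
      have hmin : min |a| |b| < |(0 : ℝ)| := (hs 0 h).1
      exact hmin.not_ge (abs_zero.trans_le (le_min (abs_nonneg a) (abs_nonneg b)))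
    change |(|b| - |a|)| = b - a
    rcases le_or_gt 0 a with ha | ha
    · rw [abs_of_nonneg ha, abs_of_nonneg (ha.trans hab.le), abs_of_pos (sub_pos.2 hab)]
    · have hb : b ≤ 0 := not_lt.1 fun hb => h0 ⟨ha, hb⟩
      rw [abs_of_neg ha, abs_of_nonpos hb, neg_sub_neg, abs_sub_comm, abs_of_pos (sub_pos.2 hab)]

theorem memI.comp {φ ψ : ℝ → ℝ} (hψ : memI ψ) (hφ : memI φ) : memI (ψ ∘ φ) := by
  rw [memI_iff_hasIsometricCrossings] at hψ hφ ⊢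
  exact ⟨one_mul (1 : NNReal) ▸ hψ.1.comp hφ.1, hψ.2.comp hφ.2 hφ.1.continuous⟩

theorem isClosed_setOfPred_memI : IsClosed {φ | memI φ} := by
  refine isClosed_of_closure_subset fun φ hφ => ?_
  have hlip : LipschitzWith 1 φ :=
    closure_minimal (fun ψ (hψ : memI ψ) => hψ.1) (isClosed_setOfPred_lipschitzWith 1) hφ
  have := mem_closure_iff_comap_neBot.1 hφ
  have hequi : UniformEquicontinuous ((↑) : {φ | memI φ} → ℝ → ℝ) :=
    LipschitzWith.uniformEquicontinuous _ 1 fun ψ => ψ.2.1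
  exact memI_iff_hasIsometricCrossings.2 ⟨hlip, .of_tendsto
    (fun ψ => (memI_iff_hasIsometricCrossings.1 ψ.2).2) hequi.equicontinuous
    (tendsto_pi_nhds.1 tendsto_comap)⟩

theorem stmt5_general :
    (memI (fun t : ℝ => t) ∧ memI (fun t : ℝ => |t|)) ∧
    (∀ φ : ℝ → ℝ, memI φ →
      memI (fun s => -(φ s)) ∧ memI (fun s => φ (-s))) ∧
    (∀ (φ : ℝ → ℝ) (s₀ : ℝ), memI φ →
      memI (fun s => φ (s + s₀)) ∧ memI (fun s => φ s + s₀)) ∧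
    (∀ φ₁ φ₂ : ℝ → ℝ, memI φ₁ → memI φ₂ → memI (φ₂ ∘ φ₁)) ∧
    IsClosed {φ | memI φ} := by
  have hneg : memI (fun t => -t) := memI_of_isometry (IsometryEquiv.neg ℝ).isometry
  have hadd (s₀ : ℝ) : memI (· + s₀) := memI_of_isometry (isometry_add_right s₀)
  exact ⟨⟨memI_of_isometry isometry_id, memI_abs⟩,
    fun _ hφ => ⟨hneg.comp hφ, hφ.comp hneg⟩,
    fun _ s₀ hφ => ⟨hφ.comp (hadd s₀), (hadd s₀).comp hφ⟩,
    fun _ _ h₁ h₂ => h₂.comp h₁,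
    isClosed_setOfPred_memI⟩

/-- Lemma 6.5: closure properties of the class `ℐ`:
(i) it contains the identity and the absolute value;
(ii) it is bi-reflection invariant;
(iii) it is bi-translation invariant;
(iv) it is closed under composition;
(v) it is closed under pointwise convergence. -/
theorem stmt5 :
    (memI (fun t : ℝ => t) ∧ memI (fun t : ℝ => |t|)) ∧
    (∀ φ : ℝ → ℝ, memI φ →
      memI (fun s => -(φ s)) ∧ memI (fun s => φ (-s))) ∧
    (∀ (φ : ℝ → ℝ) (s₀ : ℝ), memI φ →
      memI (fun s => φ (s + s₀)) ∧ memI (fun s => φ s + s₀)) ∧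
    (∀ φ₁ φ₂ : ℝ → ℝ, memI φ₁ → memI φ₂ → memI (φ₂ ∘ φ₁)) ∧
    (∀ (φk : ℕ → ℝ → ℝ) (φ : ℝ → ℝ), (∀ k, memI (φk k)) →
      (∀ t : ℝ, Tendsto (fun k => φk k t) atTop (𝓝 (φ t))) → memI φ) := by
  obtain ⟨hbase, hrefl, htrans, hcomp, hclosed⟩ := stmt5_general
  exact ⟨hbase, hrefl, htrans, hcomp, fun _ _ hφk hlim =>
    hclosed.mem_of_tendsto (tendsto_pi_nhds.2 hlim) (.of_forall hφk)⟩
end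
end
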